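/- arXiv:2509.26237 — 2 statements merged into one kernel-verified Lean document; each statement's English description precedes it below -/
import Mathlib

section
/- Let K be a field and n ≥ 2, where additionally n ≥ 3 if K has exactly two elements. Let A, B ∈ GL(n, K) be cyclic matrices. Let X ∈ GL(n−1, K) and δ ∈ K with δ ≠ 0, such that δ is not an eigenvalue of X (i.e., X − δ·Iₙ₋₁ is invertible) and det X · δ = det A · det B. Then the block diagonal matrix M = X ⊕ δ (the n×n matrix with blocks X and the 1×1 block δ on the diagonal) can be written as M = (S A S⁻¹) · (T B T⁻¹) for some S, T ∈ GL(n, K). -/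
open Matrix Polynomial

noncomputable section

/-- A matrix is cyclic if its characteristic polynomial equals its minimal polynomial. -/
def IsCyclicMat {ι : Type*} [Fintype ι] [DecidableEq ι] {K : Type*} [Field K]
    (A : Matrix ι ι K) : Prop :=
  A.charpoly = minpoly K A

/-- A matrix is nonprimary if its characteristic polynomial is a product of two
coprime nonconstant monic polynomials. -/
def IsNonprimary {ι : Type*} [Fintype ι] [DecidableEq ι] {K : Type*} [Field K]
    (M : Matrix ι ι K) : Prop :=
  ∃ f g : Polynomial K, f.Monic ∧ g.Monic ∧ 0 < f.natDegree ∧ 0 < g.natDegree ∧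
    IsCoprime f g ∧ M.charpoly = f * g

/-- A transvection: `T ≠ 1`, `(T - 1)² = 0` and `rank (T - 1) = 1`. -/
def IsTransvection {ι : Type*} [Fintype ι] [DecidableEq ι] {K : Type*} [Field K]
    (T : Matrix ι ι K) : Prop :=
  T ≠ 1 ∧ (T - 1) * (T - 1) = 0 ∧ (T - 1).rank = 1

/-!
Up to similarity `X = L * U` with `L` lower and `U` upper triangular: a transvection makes the first
diagonal entry nonzero, and one inducts on its Schur complement. A cyclic endomorphism `g` has a
basis `c` with `g (c j) = ∑ i, U i j • c (i + 1)` for `j < m`: start at a cyclic vector `c 0` and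
solve for `c (j + 1)`. Reversing the order of the basis, a cyclic `f` has a basis `a` with
`f (a (j + 1)) = ∑ i, L i j • a i`. If `f'` is the conjugate of `f` by the map `a i ↦ c i`, then
`(f' * g) (c j) = ∑ i, (L * U) i j • c i` for `j < m`, so the matrix of `f' * g` in the basis `c` is
block upper triangular with diagonal blocks `L * U` and, by the determinant condition, `δ`. As `δ`
is not an eigenvalue of `X`, a further conjugation removes the off-diagonal block.
-/

theorem exists_isConj_mul_isConj_eq {M : Type*} [Monoid M] {a a' b b' c : M}
    (ha : IsConj a a') (hb : IsConj b b') (hc : IsConj (a' * b') c) :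
    ∃ s t : Mˣ, c = (s * a * ↑s⁻¹) * (t * b * ↑t⁻¹) := by
  obtain ⟨s, hs⟩ := ha
  obtain ⟨t, ht⟩ := hb
  obtain ⟨w, hw⟩ := hc
  refine ⟨w * s, w * t, ?_⟩
  calc c = w * (a' * b') * ↑w⁻¹ := (Units.eq_mul_inv_iff_mul_eq w).2 hw.eq.symm
    _ = w * ((s * a * ↑s⁻¹) * (t * b * ↑t⁻¹)) * ↑w⁻¹ := by
      rw [(Units.mul_inv_eq_iff_eq_mul s).2 hs.eq, (Units.mul_inv_eq_iff_eq_mul t).2 ht.eq]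
    _ = _ := by simp [mul_assoc]

theorem isConj_iff_exists_isUnit {M : Type*} [Monoid M] {a b : M} :
    IsConj a b ↔ ∃ p, IsUnit p ∧ p * a = b * p :=
  ⟨fun ⟨c, hc⟩ => ⟨c, c.isUnit, hc⟩, fun ⟨_, hp, h⟩ => ⟨hp.unit, h⟩⟩

section Similarity

variable {R ι κ : Type*} [CommRing R] [Fintype ι] [DecidableEq ι] [Fintype κ] [DecidableEq κ]

theorem det_eq_of_isConj {A B : Matrix ι ι R} (h : IsConj A B) : A.det = B.det :=
  isConj_iff_eq.1 (detMonoidHom.map_isConj h)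

theorem isConj_toMatrix {V : Type*} [AddCommGroup V] [Module R V] (b c : Module.Basis ι R V)
    {f g : Module.End R V} (h : IsConj f g) :
    IsConj (LinearMap.toMatrix b b f) (LinearMap.toMatrix c c g) := by
  have hf : IsConj (LinearMap.toMatrix b b f) (LinearMap.toMatrix c c f) := by
    refine isConj_iff_exists_isUnit.2 ⟨c.toMatrix b, ?_, ?_⟩
    · exact IsUnit.of_mul_eq_one _ (c.toMatrix_mul_toMatrix_flip b)
    · rw [basis_toMatrix_mul_linearMap_toMatrix, linearMap_toMatrix_mul_basis_toMatrix]
  exact hf.trans ((MonoidHomClass.toMonoidHom (LinearMap.toMatrixAlgEquiv c)).map_isConj h)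

theorem toMatrix_eq_fromBlocks_zero₂₁ {V : Type*} [AddCommGroup V] [Module R V]
    (b : Module.Basis (ι ⊕ κ) R V) {f : Module.End R V} {Y : Matrix ι ι R}
    (hf : ∀ j, f (b (Sum.inl j)) = ∑ i, Y i j • b (Sum.inl i)) :
    ∃ W D, LinearMap.toMatrix b b f = fromBlocks Y W 0 D := by
  refine ⟨(LinearMap.toMatrix b b f).toBlocks₁₂, (LinearMap.toMatrix b b f).toBlocks₂₂, ?_⟩
  ext (i | i) (j | j) <;>
    simp [toBlocks₁₂, toBlocks₂₂, LinearMap.toMatrix_apply, hf, Finsupp.single_apply]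

theorem isConj_fromBlocks_zero₂₁ {Y X : Matrix ι ι R} (h : IsConj Y X) {δ : R}
    (hδ : IsUnit (X - δ • (1 : Matrix ι ι R)).det) (W : Matrix ι κ R) :
    IsConj (fromBlocks Y W 0 (δ • (1 : Matrix κ κ R))) (fromBlocks X 0 0 (δ • 1)) := by
  obtain ⟨P, hP, hPY⟩ := isConj_iff_exists_isUnit.1 h
  obtain ⟨Z, hZ⟩ : ∃ Z : Matrix ι κ R, (X - δ • (1 : Matrix ι ι R)) * Z = P * W :=
    ⟨_, mul_nonsing_inv_cancel_left _ _ hδ⟩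
  refine isConj_iff_exists_isUnit.2
    ⟨fromBlocks P Z 0 1, isUnit_fromBlocks_zero₂₁.2 ⟨hP, isUnit_one⟩, ?_⟩
  simp [fromBlocks_multiply, hPY, ← hZ, Matrix.sub_mul]

theorem exists_isConj_fromBlocks_mul_fromBlocks (A : Matrix ι ι R) [Invertible A]
    (B : Matrix ι κ R) (C : Matrix κ ι R) (D : Matrix κ κ R) {L U : Matrix κ κ R}
    (h : IsConj (D - C * ⅟A * B) (L * U)) :
    ∃ (C' : Matrix κ ι R) (B' : Matrix ι κ R),
      IsConj (fromBlocks A B C D) (fromBlocks 1 0 C' L * fromBlocks A B' 0 U) := by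
  obtain ⟨Q, hQ, hQLU⟩ := isConj_iff_exists_isUnit.1 h
  refine ⟨Q * C * ⅟A, B * Q⁻¹, isConj_iff_exists_isUnit.2
    ⟨fromBlocks 1 0 0 Q, isUnit_fromBlocks_zero₂₁.2 ⟨isUnit_one, hQ⟩, ?_⟩⟩
  have hBQ : B * Q⁻¹ * Q = B := nonsing_inv_mul_cancel_right _ _ ((isUnit_iff_isUnit_det Q).1 hQ)
  have hQD : Q * D = Q * C * ⅟A * B + L * U * Q := by
    rw [← hQLU, Matrix.mul_sub]
    simp only [Matrix.mul_assoc, add_sub_cancel]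
  simp [fromBlocks_multiply, hQD, Matrix.add_mul, Matrix.mul_assoc, hBQ]

end Similarity

section Triangular

variable {R : Type*} [Zero R] {m n : ℕ}

theorem isUpperTriangular_reindex_fromBlocks {A : Matrix (Fin m) (Fin m) R}
    (hA : A.IsUpperTriangular) (B : Matrix (Fin m) (Fin n) R) {D : Matrix (Fin n) (Fin n) R}
    (hD : D.IsUpperTriangular) :
    (reindex finSumFinEquiv finSumFinEquiv (fromBlocks A B 0 D)).IsUpperTriangular := by
  rw [IsUpperTriangular, blockTriangular_reindex_iff]
  rintro (i | i) (j | j) hij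
  · exact hA ((Fin.strictMono_castAdd n).lt_iff_lt.1 (by simpa using hij))
  · exact absurd hij (by simp [Fin.lt_def, i.isLt.le.trans])
  · rfl
  · exact hD (by simpa using hij)

theorem isLowerTriangular_reindex_fromBlocks {A : Matrix (Fin m) (Fin m) R}
    (hA : A.IsLowerTriangular) (C : Matrix (Fin n) (Fin m) R) {D : Matrix (Fin n) (Fin n) R}
    (hD : D.IsLowerTriangular) :
    (reindex finSumFinEquiv finSumFinEquiv (fromBlocks A 0 C D)).IsLowerTriangular := by
  simpa [fromBlocks_transpose] using
    (isUpperTriangular_reindex_fromBlocks hA.transpose Cᵀ hD.transpose).transpose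

end Triangular

section LU

variable {K : Type*} [Field K]

theorem exists_isConj_apply_ne_zero {ι : Type*} [Fintype ι] [DecidableEq ι] {X : Matrix ι ι K}
    (hX : IsUnit X.det) (i : ι) : ∃ Y, IsConj X Y ∧ Y i i ≠ 0 := by
  by_cases hi : X i i = 0
  · obtain ⟨j, hj⟩ : ∃ j, X i j ≠ 0 := by
      by_contra! hrow
      exact hX.ne_zero (det_eq_zero_of_row_eq_zero i hrow)
    have hji : j ≠ i := by rintro rfl; exact hj hi
    -- The `(i, i)` entry of this conjugate is `X i i + X i j`.
    refine ⟨transvection j i (-1) * X * transvection j i 1,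
      isConj_iff_exists_isUnit.2 ⟨transvection j i (-1), ?_, ?_⟩, ?_⟩
    · simp [isUnit_iff_isUnit_det, det_transvection_of_ne j i hji]
    · rw [mul_assoc, transvection_mul_transvection_same j i hji]
      simp
    · rw [mul_transvection_apply_same, transvection_mul_apply_of_ne _ _ _ _ hji.symm,
        transvection_mul_apply_of_ne _ _ _ _ hji.symm]
      simpa [hi] using hj
  · exact ⟨X, IsConj.refl X, hi⟩

theorem exists_isConj_lower_mul_upper {m : ℕ} {X : Matrix (Fin m) (Fin m) K}
    (hX : IsUnit X.det) :
    ∃ L U : Matrix (Fin m) (Fin m) K,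
      IsConj X (L * U) ∧ L.IsLowerTriangular ∧ U.IsUpperTriangular := by
  induction m with
  | zero =>
    exact ⟨1, 1, by rw [Subsingleton.elim X (1 * 1)], blockTriangular_one, blockTriangular_one⟩
  | succ m ih =>
    revert X
    rw [add_comm m 1]
    intro X hX
    let r := reindexAlgEquiv K K (finSumFinEquiv : Fin 1 ⊕ Fin m ≃ Fin (1 + m))
    obtain ⟨Y, hXY, hY⟩ := exists_isConj_apply_ne_zero hX (finSumFinEquiv (Sum.inl 0))
    rw [det_eq_of_isConj hXY] at hX
    obtain ⟨A, B, C, D, rfl⟩ : ∃ A B C D, r (fromBlocks A B C D) = Y :=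
      ⟨_, _, _, _, by rw [fromBlocks_toBlocks]; exact r.apply_symm_apply Y⟩
    have hA : IsUnit A.det := by simpa [r] using hY
    let := A.invertibleOfIsUnitDet hA
    have hS : IsUnit (D - C * ⅟A * B).det :=
      isUnit_of_mul_isUnit_right (x := A.det) (by simpa [r, det_fromBlocks₁₁] using hX)
    obtain ⟨L, U, hLU, hL, hU⟩ := ih hS
    obtain ⟨C', B', h⟩ := exists_isConj_fromBlocks_mul_fromBlocks A B C D hLU
    refine ⟨r (fromBlocks 1 0 C' L), r (fromBlocks A B' 0 U), ?_,
      isLowerTriangular_reindex_fromBlocks blockTriangular_one _ hL,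
      isUpperTriangular_reindex_fromBlocks (fun i j hij => absurd hij (by simp)) _ hU⟩
    rw [← map_mul]
    exact hXY.trans ((MonoidHomClass.toMonoidHom r).map_isConj h)

end LU

section Hessenberg

variable {R M : Type*} [Semiring R] [AddCommMonoid M] [Module R M] {m : ℕ}

theorem exists_succ_eq_sum_smul_apply_castSucc (f : M → M) (v : M)
    {S : Matrix (Fin m) (Fin m) R} (hS : S.IsUpperTriangular) :
    ∃ b : Fin (m + 1) → M, b 0 = v ∧ ∀ j : Fin m, b j.succ = ∑ i, S i j • f (b i.castSucc) := by
  induction m with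
  | zero => exact ⟨fun _ => v, rfl, fun j => j.elim0⟩
  | succ m ih =>
    obtain ⟨b, hb₀, hb⟩ := ih (S := S.submatrix Fin.castSucc Fin.castSucc)
      (fun i j hij => hS (by simpa using hij))
    refine ⟨Fin.snoc b (∑ i, S i (Fin.last m) • f (b i)), by simpa using hb₀, fun j => ?_⟩
    cases j using Fin.lastCases with
    | last => simp [Fin.succ_last]
    | cast j =>
      have hlast : S (Fin.last m) j.castSucc = 0 := hS (Fin.castSucc_lt_last j)
      simp only [Fin.succ_castSucc, Fin.snoc_castSucc]
      simp [hb, Fin.sum_univ_castSucc, hlast]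

theorem pow_apply_zero_mem_span_image_Iic (f : Module.End R M) {b : Fin (m + 1) → M}
    {U : Matrix (Fin m) (Fin m) R} (hU : U.IsUpperTriangular)
    (hb : ∀ j, f (b j.castSucc) = ∑ i, U i j • b i.succ) (k : Fin (m + 1)) :
    (f ^ (k : ℕ)) (b 0) ∈ Submodule.span R (b '' Set.Iic k) := by
  induction k using Fin.induction with
  | zero => exact Submodule.subset_span ⟨0, by simp⟩
  | succ k ih =>
    have hmap : Submodule.span R (b '' Set.Iic k.castSucc) ≤
        (Submodule.span R (b '' Set.Iic k.succ)).comap f := by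
      rw [Submodule.span_le]
      rintro _ ⟨j, hj, rfl⟩
      obtain ⟨j, rfl⟩ := Fin.exists_castSucc_eq.2 (hj.trans_lt (Fin.castSucc_lt_last k)).ne
      rw [SetLike.mem_coe, Submodule.mem_comap, hb]
      refine Submodule.sum_mem _ fun i _ => ?_
      by_cases hij : i ≤ j
      · exact Submodule.smul_mem _ _ (Submodule.subset_span
          ⟨_, Fin.succ_le_succ_iff.2 (hij.trans (Fin.castSucc_le_castSucc_iff.1 hj)), rfl⟩)
      · simp [hU (not_le.1 hij)]
    rw [Fin.val_succ, pow_succ', Module.End.mul_apply]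
    exact hmap ih

end Hessenberg

section Cyclic

variable {K V : Type*} [Field K] [AddCommGroup V] [Module K V] {m : ℕ}

theorem exists_forall_aeval_eq_zero_of_aeval_apply_eq_zero [FiniteDimensional K V]
    (f : Module.End K V) :
    ∃ v : V, ∀ p : K[X], aeval f p v = 0 → aeval f p = 0 := by
  obtain ⟨x, hx⟩ := Module.exists_ker_toSpanSingleton_eq_annihilator K[X] (Module.AEval' f)
  obtain ⟨v, rfl⟩ := (Module.AEval'.of f).surjective x
  refine ⟨v, fun p hp => ?_⟩
  rw [← minpoly.dvd_iff, ← Ideal.mem_span_singleton, span_minpoly_eq_annihilator, ← hx,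
    LinearMap.mem_ker, LinearMap.toSpanSingleton_apply]
  change p • Module.AEval.of K V f v = 0
  rw [← Module.AEval.of_aeval_smul, Module.End.smul_def, hp, map_zero]

theorem exists_linearIndependent_pow_apply [FiniteDimensional K V] (f : Module.End K V) :
    ∃ v : V, LinearIndependent K fun i : Fin (minpoly K f).natDegree => (f ^ (i : ℕ)) v := by
  obtain ⟨v, hv⟩ := exists_forall_aeval_eq_zero_of_aeval_apply_eq_zero f
  refine ⟨v, Fintype.linearIndependent_iff.2 fun c hc => ?_⟩
  have haeval : aeval f (∑ i, C (c i) * X ^ (i : ℕ)) = ∑ i, c i • f ^ (i : ℕ) := by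
    simp [← smul_eq_C_mul]
  refine Fintype.linearIndependent_iff.1 (linearIndependent_pow f) c ?_
  rw [← haeval]
  exact hv _ (by simpa [haeval] using hc)

theorem exists_basis_apply_castSucc_eq_sum_smul (f : Module.End K V)
    (hf : (minpoly K f).natDegree = m + 1) (hV : Module.finrank K V = m + 1)
    {U : Matrix (Fin m) (Fin m) K} (hU : U.IsUpperTriangular) (hU' : IsUnit U.det) :
    ∃ b : Module.Basis (Fin (m + 1)) K V, ∀ j, f (b j.castSucc) = ∑ i, U i j • b i.succ := by
  have : FiniteDimensional K V := Module.finite_of_finrank_eq_succ hV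
  let := U.invertibleOfIsUnitDet hU'
  obtain ⟨v, hv⟩ := exists_linearIndependent_pow_apply f
  rw [hf] at hv
  obtain ⟨b, rfl, hb⟩ := exists_succ_eq_sum_smul_apply_castSucc f v
    (blockTriangular_inv_of_blockTriangular hU)
  have hfb (j : Fin m) : f (b j.castSucc) = ∑ i, U i j • b i.succ := by
    simp_rw [hb, Finset.smul_sum, smul_smul]
    rw [Finset.sum_comm]
    simp_rw [← Finset.sum_smul, mul_comm (U _ _), ← Matrix.mul_apply,
      nonsing_inv_mul U hU', Matrix.one_apply, ite_smul, one_smul, zero_smul]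
    simp
  have hspan : ⊤ ≤ Submodule.span K (Set.range b) := by
    rw [← hv.span_eq_top_of_card_eq_finrank' (by simp [hV]), Submodule.span_le]
    rintro _ ⟨k, rfl⟩
    exact Submodule.span_mono (Set.image_subset_range _ _)
      (pow_apply_zero_mem_span_image_Iic f hU hfb k)
  exact ⟨basisOfTopLeSpanOfCardEqFinrank b hspan (by simp [hV]), by simpa using hfb⟩

theorem exists_basis_apply_succ_eq_sum_smul (f : Module.End K V)
    (hf : (minpoly K f).natDegree = m + 1) (hV : Module.finrank K V = m + 1)
    {L : Matrix (Fin m) (Fin m) K} (hL : L.IsLowerTriangular) (hL' : IsUnit L.det) :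
    ∃ a : Module.Basis (Fin (m + 1)) K V, ∀ j, f (a j.succ) = ∑ i, L i j • a i.castSucc := by
  obtain ⟨b, hb⟩ := exists_basis_apply_castSucc_eq_sum_smul f hf hV
    (U := L.submatrix Fin.revPerm Fin.revPerm) (fun i j hij => hL (by simpa using hij))
    (by rwa [det_submatrix_equiv_self])
  refine ⟨b.reindex Fin.revPerm, fun j => ?_⟩
  rw [← Equiv.sum_comp Fin.revPerm]
  simpa [Fin.rev_succ, Fin.rev_castSucc] using hb j.rev

theorem exists_isConj_mul_apply_castSucc_eq_sum_smul {f g : Module.End K V}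
    (hf : (minpoly K f).natDegree = m + 1) (hg : (minpoly K g).natDegree = m + 1)
    (hV : Module.finrank K V = m + 1) {L U : Matrix (Fin m) (Fin m) K}
    (hL : L.IsLowerTriangular) (hU : U.IsUpperTriangular) (hLU : IsUnit (L * U).det) :
    ∃ f' : Module.End K V, IsConj f f' ∧ ∃ c : Module.Basis (Fin (m + 1)) K V,
      ∀ j, (f' * g) (c j.castSucc) = ∑ i, (L * U) i j • c i.castSucc := by
  rw [det_mul, IsUnit.mul_iff] at hLU
  obtain ⟨a, ha⟩ := exists_basis_apply_succ_eq_sum_smul f hf hV hL hLU.1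
  obtain ⟨c, hc⟩ := exists_basis_apply_castSucc_eq_sum_smul g hg hV hU hLU.2
  let φ : V ≃ₗ[K] V := a.equiv c (Equiv.refl _)
  have hf' (j : Fin m) : φ.conj f (c j.succ) = ∑ i, L i j • c i.castSucc := by
    simp [LinearEquiv.conj_apply, ha, φ]
  refine ⟨φ.conj f, isConj_iff_exists_isUnit.2 ⟨φ, ?_, ?_⟩, c, fun j => ?_⟩
  · exact (Module.End.isUnit_iff _).2 φ.bijective
  · ext; simp [LinearEquiv.conj_apply]
  · simp_rw [Module.End.mul_apply, hc, map_sum, map_smul, hf', Finset.smul_sum, smul_smul,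
      Matrix.mul_apply, Finset.sum_smul, mul_comm (U _ _)]
    exact Finset.sum_comm

end Cyclic

section Product

variable {K : Type*} [Field K] {m : ℕ}

theorem exists_isConj_mul_eq_fromBlocks_zero₂₁
    {A B : Matrix (Fin m ⊕ Fin 1) (Fin m ⊕ Fin 1) K} (hA : IsCyclicMat A) (hB : IsCyclicMat B)
    {X : Matrix (Fin m) (Fin m) K} (hX : IsUnit X.det) :
    ∃ A' B' Y W D, IsConj A A' ∧ IsConj B B' ∧ IsConj X Y ∧ A' * B' = fromBlocks Y W 0 D := by
  have natDegree_minpoly {C : Matrix (Fin m ⊕ Fin 1) (Fin m ⊕ Fin 1) K} (hC : IsCyclicMat C) :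
      (minpoly K (toLin' C)).natDegree = m + 1 := by
    rw [minpoly_toLin', ← hC, charpoly_natDegree_eq_dim]
    simp
  obtain ⟨L, U, hXLU, hL, hU⟩ := exists_isConj_lower_mul_upper hX
  obtain ⟨f, hAf, c, hc⟩ := exists_isConj_mul_apply_castSucc_eq_sum_smul
    (natDegree_minpoly hA) (natDegree_minpoly hB) (by simp) hL hU (det_eq_of_isConj hXLU ▸ hX)
  let c' := c.reindex finSumFinEquiv.symm
  obtain ⟨W, D, hWD⟩ := toMatrix_eq_fromBlocks_zero₂₁ c' (f := f * toLin' B) (Y := L * U)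
    (fun j => by simp only [c', Module.Basis.reindex_apply, Equiv.symm_symm]; exact hc j)
  refine ⟨LinearMap.toMatrix c' c' f, LinearMap.toMatrix c' c' (toLin' B), _, W, D, ?_, ?_, hXLU,
    by rw [← hWD, LinearMap.toMatrix_mul]⟩
  · simpa using isConj_toMatrix (Pi.basisFun K _) c' hAf
  · simpa using isConj_toMatrix (Pi.basisFun K _) c' (IsConj.refl (toLin' B))

theorem product_of_cyclic_classes_contains_block_diag_dilation_general
    (A B : Matrix (Fin m ⊕ Fin 1) (Fin m ⊕ Fin 1) K) (hcA : IsCyclicMat A) (hcB : IsCyclicMat B)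
    (X : Matrix (Fin m) (Fin m) K) (hX : IsUnit X.det) (δ : K)
    (heig : IsUnit (X - δ • (1 : Matrix (Fin m) (Fin m) K)).det)
    (hdet : X.det * δ = A.det * B.det) :
    ∃ S T : Matrix (Fin m ⊕ Fin 1) (Fin m ⊕ Fin 1) K, IsUnit S.det ∧ IsUnit T.det ∧
      fromBlocks X 0 0 (δ • (1 : Matrix (Fin 1) (Fin 1) K)) = (S * A * S⁻¹) * (T * B * T⁻¹) := by
  obtain ⟨A', B', Y, W, D, hA, hB, hXY, hAB⟩ := exists_isConj_mul_eq_fromBlocks_zero₂₁ hcA hcB hX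
  have hD : D.det = δ := hX.mul_left_cancel <| by
    rw [hdet, det_eq_of_isConj hA, det_eq_of_isConj hB, ← det_mul, hAB, det_fromBlocks_zero₂₁,
      det_eq_of_isConj hXY]
  obtain rfl : D = δ • 1 := by
    ext i j
    simp [Subsingleton.elim i 0, Subsingleton.elim j 0, ← hD]
  obtain ⟨S, T, hST⟩ := exists_isConj_mul_isConj_eq hA hB
    (hAB ▸ isConj_fromBlocks_zero₂₁ hXY.symm heig W)
  refine ⟨S, T, (isUnit_iff_isUnit_det _).1 S.isUnit, (isUnit_iff_isUnit_det _).1 T.isUnit, ?_⟩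
  rw [hST, coe_units_inv, coe_units_inv]

end Product

theorem product_of_cyclic_classes_contains_block_diag_dilation {K : Type*} [Field K]
    {n : ℕ} (hn : 2 ≤ n) (hK : Nat.card K = 2 → 3 ≤ n)
    (A B : Matrix (Fin (n - 1) ⊕ Fin 1) (Fin (n - 1) ⊕ Fin 1) K)
    (hA : IsUnit A.det) (hB : IsUnit B.det)
    (hcA : IsCyclicMat A) (hcB : IsCyclicMat B)
    (X : Matrix (Fin (n - 1)) (Fin (n - 1)) K) (hX : IsUnit X.det)
    (δ : K) (hδ : δ ≠ 0)
    (heig : IsUnit (X - δ • (1 : Matrix (Fin (n - 1)) (Fin (n - 1)) K)).det)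
    (hdet : X.det * δ = A.det * B.det) :
    ∃ S T : Matrix (Fin (n - 1) ⊕ Fin 1) (Fin (n - 1) ⊕ Fin 1) K,
      IsUnit S.det ∧ IsUnit T.det ∧
      Matrix.fromBlocks X 0 0 (δ • (1 : Matrix (Fin 1) (Fin 1) K))
        = (S * A * S⁻¹) * (T * B * T⁻¹) :=
  product_of_cyclic_classes_contains_block_diag_dilation_general A B hcA hcB X hX δ heig hdet
end
end

section
/- Let K be a field and n ≥ 2, where additionally n ≥ 3 if K has exactly two elements. Let A ∈ GL(n, K) be a cyclic matrix whose characteristic polynomial is reducible, i.e., it factors as a product of two nonconstant monic polynomials in K[x]. Then there exist X, Y ∈ GL(n, K) such that (X A X⁻¹) · (Y A⁻¹ Y⁻¹) is a transvection. -/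
open Matrix Polynomial

noncomputable section

/-!
Let `f * g` be the minimal polynomial of the operator `φ` given by `A`, and `v` a cyclic vector. The
projection `P : h(φ) v ↦ (h mod f)(φ) v` commutes with `φ` up to rank one, because the remainder of
`X * h` differs from `X` times the remainder of `h` by a scalar multiple of `f`. For a polynomial
`b` put `M = P + b(φ) (1 - P)`; then `[M, φ] = (1 - b(φ)) [P, φ]` still has rank at most one. It is
nonzero if `g` does not divide `1 - b`, and `M` is invertible if `b` is coprime to `f * g`. Now
`M A M⁻¹ A⁻¹ - 1 = [M, A] M⁻¹ A⁻¹` has rank one, and since `M A M⁻¹ A⁻¹` has determinant one it is a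
transvection. If `K` has an element `β ≠ 0, 1`, take `b = β`; over the field with two elements take
`b = X` and choose `g` to be the factor of degree at least two.
-/

section Transvection

variable {ι K : Type*} [Fintype ι] [Field K]

theorem eq_zero_of_rank_eq_zero {m : Type*} [Finite m] {N : Matrix m ι K} (h : N.rank = 0) :
    N = 0 := by
  classical
  rw [Matrix.rank, Submodule.finrank_eq_zero, LinearMap.range_eq_bot] at h
  exact (toLin' (R := K)).injective (h.trans (map_zero _).symm)

variable [DecidableEq ι]

theorem isTransvection_of_sub_one_eq_vecMulVec {T : Matrix ι ι K} {u w : ι → K}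
    (hT : T ≠ 1) (hdet : T.det = 1) (h : T - 1 = vecMulVec u w) : IsTransvection T := by
  have hwu : w ⬝ᵥ u = 0 := by
    rw [← add_sub_cancel 1 T, h, vecMulVec_eq Unit,
      det_one_add_replicateCol_mul_replicateRow] at hdet
    simpa using hdet
  refine ⟨hT, ?_, le_antisymm ?_ ?_⟩
  · rw [h, vecMulVec_mul_vecMulVec, hwu, zero_smul, vecMulVec_zero]
  · exact h ▸ rank_vecMulVec_le u w
  · exact Nat.one_le_iff_ne_zero.2 fun hrank ↦ hT (sub_eq_zero.1 (eq_zero_of_rank_eq_zero hrank))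

theorem isTransvection_conj_mul_inv {A M : Matrix ι ι K} (hA : IsUnit A.det)
    (hM : IsUnit M.det) (hne : ¬Commute M A) {u z : ι → K}
    (h : M * A - A * M = vecMulVec u z) : IsTransvection (M * A * M⁻¹ * A⁻¹) := by
  have hcancel : A * M * (M⁻¹ * A⁻¹) = 1 := by
    rw [mul_assoc, mul_nonsing_inv_cancel_left _ _ hM, mul_nonsing_inv _ hA]
  refine isTransvection_of_sub_one_eq_vecMulVec (u := u) (w := z ᵥ* (M⁻¹ * A⁻¹)) ?_ ?_ ?_
  · intro hT
    apply hne
    calc M * A = M * A * M⁻¹ * A⁻¹ * (A * M) := by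
          rw [← mul_assoc, nonsing_inv_mul_cancel_right _ _ hA,
            nonsing_inv_mul_cancel_right _ _ hM]
      _ = A * M := by rw [hT, one_mul]
  · calc (M * A * M⁻¹ * A⁻¹).det = (A * M * (M⁻¹ * A⁻¹)).det := by
          simp only [det_mul]; ring
      _ = 1 := by rw [hcancel, det_one]
  · rw [← vecMulVec_mul, ← h, sub_mul, hcancel, mul_assoc (M * A)]

end Transvection

section RemainderModulo

variable {R : Type*} [CommRing R]

-- For `f = 1` the truncated `f.natDegree - 1` is harmless: the remainder vanishes.
theorem X_mul_modByMonic {f : R[X]} (hf : f.Monic) (h : R[X]) :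
    (X * h) %ₘ f = X * (h %ₘ f) - C ((h %ₘ f).coeff (f.natDegree - 1)) * f := by
  nontriviality R
  set r := h %ₘ f
  set c := r.coeff (f.natDegree - 1)
  have hr0 : ∀ k, f.natDegree ≤ k → r.coeff k = 0 := fun k hk ↦
    coeff_eq_zero_of_degree_lt ((degree_modByMonic_lt h hf).trans_le
      (degree_le_of_natDegree_le hk))
  have hdeg : (X * r - C c * f).degree < f.degree := by
    rw [degree_eq_natDegree hf.ne_zero, degree_lt_iff_coeff_zero]
    intro m hm
    rw [coeff_sub, coeff_C_mul]
    rcases m with _ | k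
    · have hc : c = 0 := hr0 _ (by omega)
      rw [hc, coeff_X_mul_zero, zero_mul, sub_zero]
    · rcases hm.eq_or_lt with hmd | hmd
      · rw [coeff_X_mul, ← hmd, hf.coeff_natDegree, mul_one, sub_eq_zero]
        exact congrArg r.coeff (by omega)
      · rw [coeff_X_mul, hr0 k (by omega), coeff_eq_zero_of_natDegree_lt hmd, mul_zero, sub_zero]
  calc (X * h) %ₘ f = (X * r - C c * f) %ₘ f :=
        modByMonic_eq_of_dvd_sub hf ⟨X * (h /ₘ f) + C c, by
          linear_combination -X * modByMonic_add_div h f⟩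
    _ = X * r - C c * f := (modByMonic_eq_self_iff hf).2 hdeg

end RemainderModulo

theorem exists_comp_eq_of_ker_le_ker {R M N P : Type*} [Ring R] [AddCommGroup M] [AddCommGroup N]
    [AddCommGroup P] [Module R M] [Module R N] [Module R P] {e : M →ₗ[R] N}
    (he : Function.Surjective e) {g : M →ₗ[R] P} (h : LinearMap.ker e ≤ LinearMap.ker g) :
    ∃ k : N →ₗ[R] P, k ∘ₗ e = g := by
  refine ⟨(LinearMap.ker e).liftQ g h ∘ₗ (e.quotKerEquivOfSurjective he).symm, ?_⟩
  ext x
  have : (e.quotKerEquivOfSurjective he).symm (e x) = (LinearMap.ker e).mkQ x := by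
    rw [LinearEquiv.symm_apply_eq]; rfl
  simp [this]

section OrbitMap

variable {R V : Type*} [CommRing R] [AddCommGroup V] [Module R V]

/-- The map `h ↦ h(φ) v` from polynomials to the space on which `φ` acts. -/
def orbitMap (φ : Module.End R V) (v : V) : R[X] →ₗ[R] V :=
  (LinearMap.applyₗ v).comp (aeval φ).toLinearMap

/-- `v` is a cyclic vector of `φ`: the vectors `v, φ v, φ² v, …` span the whole space. -/
def IsCyclicVector (φ : Module.End R V) (v : V) : Prop :=
  Function.Surjective (orbitMap φ v)

theorem orbitMap_mul (φ : Module.End R V) (v : V) (b h : R[X]) :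
    orbitMap φ v (b * h) = aeval φ b (orbitMap φ v h) := by
  simp [orbitMap]

theorem orbitMap_X_mul (φ : Module.End R V) (v : V) (h : R[X]) :
    orbitMap φ v (X * h) = φ (orbitMap φ v h) := by
  rw [orbitMap_mul, aeval_X]

theorem IsCyclicVector.end_ext {φ : Module.End R V} {v : V} (hv : IsCyclicVector φ v)
    {S T : Module.End R V} (h : ∀ q, S (orbitMap φ v q) = T (orbitMap φ v q)) : S = T := by
  ext y
  obtain ⟨q, rfl⟩ := hv y
  exact h q

end OrbitMap

section RemainderProjection

variable {R V : Type*} [CommRing R] [AddCommGroup V] [Module R V]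

/-- `P` replaces `h(φ) v` by `r(φ) v`, where `r` is the remainder of `h` modulo `f`. If `v` is
cyclic, `P` is the projection along the invariant subspace `f(φ) V` onto the span of the `φⁱ v` with
`i < deg f`. -/
def IsRemainderProjection (φ : Module.End R V) (v : V) (f : R[X]) (P : Module.End R V) : Prop :=
  ∀ h, P (orbitMap φ v h) = orbitMap φ v (h %ₘ f)

variable {φ P : Module.End R V} {v : V} {f : R[X]}

theorem IsRemainderProjection.mul_aeval_mul_one_sub (hP : IsRemainderProjection φ v f P)
    (hv : IsCyclicVector φ v) (hf : f.Monic) (b : R[X]) : P * (aeval φ b * (1 - P)) = 0 := by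
  refine hv.end_ext fun h ↦ ?_
  have hmod : (b * (h - h %ₘ f)) %ₘ f = 0 := by
    rw [modByMonic_eq_zero_iff_dvd hf, ← neg_sub, mul_neg, dvd_neg]
    exact (dvd_modByMonic_sub h f).mul_left b
  simp only [Module.End.mul_apply, LinearMap.sub_apply, Module.End.one_apply,
    LinearMap.zero_apply]
  rw [hP, ← map_sub, ← orbitMap_mul, hP, hmod, map_zero]

theorem IsRemainderProjection.isIdempotentElem (hP : IsRemainderProjection φ v f P)
    (hv : IsCyclicVector φ v) (hf : f.Monic) : IsIdempotentElem P := by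
  have := hP.mul_aeval_mul_one_sub hv hf 1
  rw [map_one, one_mul, mul_sub, mul_one, sub_eq_zero] at this
  exact this.symm

end RemainderProjection

section CyclicVector

variable {K V : Type*} [Field K] [AddCommGroup V] [Module K V] {φ : Module.End K V} {v : V}

theorem IsCyclicVector.orbitMap_eq_zero_iff (hv : IsCyclicVector φ v) {h : K[X]} :
    orbitMap φ v h = 0 ↔ minpoly K φ ∣ h := by
  rw [minpoly.dvd_iff]
  refine ⟨fun h0 ↦ LinearMap.ext fun y ↦ ?_, fun h0 ↦ ?_⟩
  · obtain ⟨q, rfl⟩ := hv y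
    rw [← orbitMap_mul, mul_comm, orbitMap_mul, h0, map_zero, LinearMap.zero_apply]
  · exact LinearMap.congr_fun h0 v

theorem exists_isCyclicVector [FiniteDimensional K V] (hφ : φ.charpoly = minpoly K φ) :
    ∃ v, IsCyclicVector φ v := by
  obtain ⟨x, hx⟩ := Module.exists_ker_toSpanSingleton_eq_annihilator K[X] (Module.AEval' φ)
  obtain ⟨v, rfl⟩ := (Module.AEval'.of φ).surjective x
  rw [← span_minpoly_eq_annihilator] at hx
  have hker : LinearMap.ker (orbitMap φ v) = (Ideal.span {minpoly K φ}).restrictScalars K := by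
    ext h
    rw [Submodule.restrictScalars_mem, ← hx]
    rfl
  refine ⟨v, LinearMap.range_eq_top.1 (Submodule.eq_top_of_finrank_eq ?_)⟩
  calc Module.finrank K (LinearMap.range (orbitMap φ v))
      = Module.finrank K (K[X] ⧸ LinearMap.ker (orbitMap φ v)) :=
        (orbitMap φ v).quotKerEquivRange.finrank_eq.symm
    _ = Module.finrank K (K[X] ⧸ Ideal.span {minpoly K φ}) := by rw [hker]; rfl
    _ = (minpoly K φ).natDegree := finrank_quotient_span_eq_natDegree
    _ = Module.finrank K V := by rw [← hφ, φ.charpoly_natDegree]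

theorem IsCyclicVector.exists_orbitMap_eq_modByMonic (hv : IsCyclicVector φ v) {f : K[X]}
    (hf : f.Monic) (hdvd : f ∣ minpoly K φ) {W : Type*} [AddCommGroup W] [Module K W]
    (L : K[X] →ₗ[K] W) : ∃ k : V →ₗ[K] W, ∀ h, k (orbitMap φ v h) = L (h %ₘ f) := by
  have hker : LinearMap.ker (orbitMap φ v) ≤ LinearMap.ker (L ∘ₗ modByMonicHom f) := by
    intro h hh
    have hfh : f ∣ h := hdvd.trans (hv.orbitMap_eq_zero_iff.1 hh)
    simp [(modByMonic_eq_zero_iff_dvd hf).2 hfh]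
  obtain ⟨k, hk⟩ := exists_comp_eq_of_ker_le_ker hv hker
  exact ⟨k, LinearMap.congr_fun hk⟩

theorem IsCyclicVector.exists_isRemainderProjection (hv : IsCyclicVector φ v) {f : K[X]}
    (hf : f.Monic) (hdvd : f ∣ minpoly K φ) : ∃ P, IsRemainderProjection φ v f P :=
  hv.exists_orbitMap_eq_modByMonic hf hdvd (orbitMap φ v)

end CyclicVector

section BlockwisePerturbation

theorem commutator_add_mul_one_sub {S : Type*} [Ring S] {φ ψ : S} (h : Commute φ ψ) (P : S) :
    (P + ψ * (1 - P)) * φ - φ * (P + ψ * (1 - P)) = (1 - ψ) * (P * φ - φ * P) := by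
  calc _ = (1 - ψ) * (P * φ) - φ * P + (ψ * φ - φ * ψ) + (φ * ψ) * P := by noncomm_ring
    _ = (1 - ψ) * (P * φ - φ * P) := by rw [h.eq]; noncomm_ring

theorem injective_add_mul_one_sub {R V : Type*} [Ring R] [AddCommGroup V] [Module R V]
    {P ψ : Module.End R V} (hP : IsIdempotentElem P) (hinv : P * (ψ * (1 - P)) = 0)
    (hψ : Function.Injective ψ) : Function.Injective ⇑(P + ψ * (1 - P)) := by
  rw [← LinearMap.ker_eq_bot, LinearMap.ker_eq_bot']
  intro y hy
  have hPM : P * (P + ψ * (1 - P)) = P := by rw [mul_add, hP.eq, hinv, add_zero]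
  have hPy : P y = 0 := by rw [← hPM, Module.End.mul_apply, hy, map_zero]
  have hψy : ψ y = 0 := by simpa [hPy] using hy
  exact hψ (hψy.trans (map_zero ψ).symm)

theorem aeval_injective_of_isCoprime_minpoly {R V : Type*} [CommRing R] [AddCommGroup V]
    [Module R V] {φ : Module.End R V} {b : R[X]} (hb : IsCoprime b (minpoly R φ)) :
    Function.Injective (aeval φ b) := by
  have := disjoint_ker_aeval_of_isCoprime φ hb
  rwa [minpoly.aeval, LinearMap.ker_zero, disjoint_top, LinearMap.ker_eq_bot] at this

end BlockwisePerturbation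

section Commutator

variable {K V : Type*} [Field K] [AddCommGroup V] [Module K V] {φ P : Module.End K V} {v : V}
  {f : K[X]}

theorem IsRemainderProjection.exists_commutator_eq_smulRight (hP : IsRemainderProjection φ v f P)
    (hv : IsCyclicVector φ v) (hf : f.Monic) (hfd : 0 < f.natDegree) (hdvd : f ∣ minpoly K φ) :
    ∃ z : Module.Dual K V, z ≠ 0 ∧ P * φ - φ * P = z.smulRight (orbitMap φ v f) := by
  obtain ⟨z, hzh⟩ := hv.exists_orbitMap_eq_modByMonic hf hdvd (-lcoeff K (f.natDegree - 1))
  refine ⟨z, fun hz0 ↦ ?_, hv.end_ext fun h ↦ ?_⟩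
  · have hX : (X ^ (f.natDegree - 1) : K[X]) %ₘ f = X ^ (f.natDegree - 1) := by
      rw [modByMonic_eq_self_iff hf, degree_X_pow, degree_eq_natDegree hf.ne_zero]
      exact_mod_cast Nat.sub_one_lt hfd.ne'
    have := hzh (X ^ (f.natDegree - 1))
    rw [hz0, hX, LinearMap.neg_apply, lcoeff_apply, coeff_X_pow_self, LinearMap.zero_apply] at this
    exact one_ne_zero (neg_eq_zero.1 this.symm)
  · simp only [LinearMap.sub_apply, Module.End.mul_apply, LinearMap.smulRight_apply]
    rw [← orbitMap_X_mul, hP, hP, ← orbitMap_X_mul, ← map_sub, hzh, X_mul_modByMonic hf,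
      LinearMap.neg_apply, lcoeff_apply, ← map_smul, sub_sub_cancel_left, neg_smul, smul_eq_C_mul]

theorem exists_isUnit_commutator_eq_smulRight [FiniteDimensional K V]
    (hφ : φ.charpoly = minpoly K φ) {g b : K[X]} (hf : f.Monic) (hfd : 0 < f.natDegree)
    (hfg : minpoly K φ = f * g) (hb : IsCoprime b (minpoly K φ)) (hgb : ¬g ∣ 1 - b) :
    ∃ M : Module.End K V, IsUnit M ∧ ¬Commute M φ ∧
      ∃ (z : Module.Dual K V) (u : V), M * φ - φ * M = z.smulRight u := by
  have hdvd : f ∣ minpoly K φ := hfg ▸ dvd_mul_right f g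
  obtain ⟨v, hv⟩ := exists_isCyclicVector hφ
  obtain ⟨P, hP⟩ := hv.exists_isRemainderProjection hf hdvd
  obtain ⟨z, hz, hPφ⟩ := hP.exists_commutator_eq_smulRight hv hf hfd hdvd
  have hcomm : Commute φ (aeval φ b) := by
    simpa only [aeval_X] using (Commute.all X b).map (aeval φ)
  let M := P + aeval φ b * (1 - P)
  let u := orbitMap φ v ((1 - b) * f)
  have hMφ : M * φ - φ * M = z.smulRight u := by
    rw [commutator_add_mul_one_sub hcomm, hPφ]
    ext y
    simp [u, orbitMap_mul]
  have hu : u ≠ 0 := by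
    rw [Ne, hv.orbitMap_eq_zero_iff, hfg, mul_comm (1 - b)]
    exact fun h ↦ hgb ((mul_dvd_mul_iff_left hf.ne_zero).1 h)
  have hinj : Function.Injective M :=
    injective_add_mul_one_sub (hP.isIdempotentElem hv hf) (hP.mul_aeval_mul_one_sub hv hf b)
      (aeval_injective_of_isCoprime_minpoly hb)
  refine ⟨M, (LinearMap.isUnit_iff_ker_eq_bot M).2 (LinearMap.ker_eq_bot.2 hinj), fun h ↦ ?_,
    z, u, hMφ⟩
  rw [h.eq, sub_self] at hMφ
  obtain ⟨y, hy⟩ := DFunLike.ne_iff.1 hz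
  exact smul_ne_zero hy hu (LinearMap.congr_fun hMφ y).symm

end Commutator

section MatrixForm

variable {ι K : Type*} [Fintype ι] [DecidableEq ι] [Field K]

theorem exists_conj_mul_inv_isTransvection {A : Matrix ι ι K} (hA : IsUnit A.det)
    (hcA : IsCyclicMat A) {f g b : K[X]} (hf : f.Monic) (hfd : 0 < f.natDegree)
    (hfg : A.charpoly = f * g) (hb : IsCoprime b A.charpoly) (hgb : ¬g ∣ 1 - b) :
    ∃ M : Matrix ι ι K, IsUnit M.det ∧ IsTransvection (M * A * M⁻¹ * A⁻¹) := by
  have hmin : minpoly K (toLin' A) = A.charpoly := (minpoly_toLin' A).trans hcA.symm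
  obtain ⟨M, hM, hne, z, u, hMφ⟩ := exists_isUnit_commutator_eq_smulRight
    ((charpoly_toLin' A).trans hmin.symm) hf hfd (hmin.trans hfg) (hmin.symm ▸ hb) hgb
  have hMdet : IsUnit (LinearMap.toMatrix' M).det := by
    rw [← isUnit_iff_isUnit_det]
    exact hM.map LinearMap.toMatrixAlgEquiv'
  refine ⟨LinearMap.toMatrix' M, hMdet, isTransvection_conj_mul_inv hA hMdet (fun h ↦ hne ?_)
    (u := u) (z := fun i ↦ z (Pi.single i 1)) ?_⟩
  · rw [← toLin'_toMatrix' M]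
    exact h.map (toLinAlgEquiv' (R := K))
  · calc LinearMap.toMatrix' M * A - A * LinearMap.toMatrix' M
        = LinearMap.toMatrix' (M * toLin' A - toLin' A * M) := by
          rw [map_sub, LinearMap.toMatrix'_mul, LinearMap.toMatrix'_mul, LinearMap.toMatrix'_toLin']
      _ = vecMulVec u fun i ↦ z (Pi.single i 1) := by
          rw [hMφ]
          ext i j
          simp [LinearMap.toMatrix'_apply, vecMulVec_apply, mul_comm]

end MatrixForm

section FactorChoice

variable {K : Type*} [Field K]

theorem exists_ne_zero_ne_one_of_card_ne_two (hK : Nat.card K ≠ 2) : ∃ β : K, β ≠ 0 ∧ β ≠ 1 := by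
  by_contra! h
  exact hK ((Nat.card_eq_two_iff' 0).2 ⟨1, one_ne_zero, h⟩)

theorem not_dvd_one_sub_X_of_two_le_natDegree {q : K[X]} (hq : 2 ≤ q.natDegree) :
    ¬q ∣ 1 - X := by
  have hdeg : (1 - X : K[X]).natDegree = 1 := by
    rw [← neg_sub, natDegree_neg, ← C_1, natDegree_X_sub_C]
  exact fun h ↦ absurd (natDegree_le_of_dvd h (ne_zero_of_natDegree_gt (hdeg ▸ one_pos)))
    (by omega)

theorem exists_factorization_isCoprime_not_dvd_one_sub {f g : K[X]} (hf : f.Monic) (hg : g.Monic)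
    (hfd : 0 < f.natDegree) (hgd : 0 < g.natDegree) (h0 : IsCoprime X (f * g))
    (hK : Nat.card K = 2 → 3 ≤ (f * g).natDegree) :
    ∃ f₁ g₁ b : K[X], f₁.Monic ∧ 0 < f₁.natDegree ∧ f * g = f₁ * g₁ ∧
      IsCoprime b (f * g) ∧ ¬g₁ ∣ 1 - b := by
  by_cases hcard : Nat.card K = 2
  · have hdeg : 3 ≤ f.natDegree + g.natDegree := hf.natDegree_mul hg ▸ hK hcard
    rcases le_or_gt 2 g.natDegree with hg2 | hg2
    · exact ⟨f, g, X, hf, hfd, rfl, h0, not_dvd_one_sub_X_of_two_le_natDegree hg2⟩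
    · exact ⟨g, f, X, hg, hgd, mul_comm f g, h0,
        not_dvd_one_sub_X_of_two_le_natDegree (by omega)⟩
  · obtain ⟨β, hβ0, hβ1⟩ := exists_ne_zero_ne_one_of_card_ne_two hcard
    have hCβ : IsCoprime (C β) (f * g) :=
      isCoprime_one_left.of_isCoprime_of_dvd_left (isUnit_C.2 hβ0.isUnit).dvd
    have hunit : IsUnit (1 - C β) := by
      rw [← C_1, ← C_sub, isUnit_C, isUnit_iff_ne_zero, sub_ne_zero]
      exact hβ1.symm
    refine ⟨f, g, C β, hf, hfd, rfl, hCβ, fun h ↦ ?_⟩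
    exact hgd.ne' (natDegree_eq_zero_of_isUnit (isUnit_of_dvd_unit h hunit))

theorem isCoprime_X_charpoly {ι : Type*} [Fintype ι] [DecidableEq ι] {A : Matrix ι ι K}
    (hA : IsUnit A.det) : IsCoprime X A.charpoly := by
  rw [irreducible_X.coprime_iff_not_dvd, X_dvd_iff]
  intro h
  exact hA.ne_zero (by rw [det_eq_sign_charpoly_coeff, h, mul_zero])

end FactorChoice

theorem class_times_inverse_class_contains_transvection {K : Type*} [Field K] {n : ℕ}
    (hn : 2 ≤ n) (hK : Nat.card K = 2 → 3 ≤ n)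
    (A : Matrix (Fin n) (Fin n) K) (hA : IsUnit A.det) (hcA : IsCyclicMat A)
    (hred : ∃ f g : Polynomial K, f.Monic ∧ g.Monic ∧
      0 < f.natDegree ∧ 0 < g.natDegree ∧ A.charpoly = f * g) :
    ∃ X Y : Matrix (Fin n) (Fin n) K, IsUnit X.det ∧ IsUnit Y.det ∧
      IsTransvection ((X * A * X⁻¹) * (Y * A⁻¹ * Y⁻¹)) := by
  obtain ⟨f, g, hf, hg, hfd, hgd, hfg⟩ := hred
  have hX : IsCoprime X (f * g) := hfg ▸ isCoprime_X_charpoly hA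
  have hdeg : (f * g).natDegree = n := by
    rw [← hfg, A.charpoly_natDegree_eq_dim, Fintype.card_fin]
  obtain ⟨f₁, g₁, b, hf₁, hf₁d, hfg₁, hb, hg₁b⟩ :=
    exists_factorization_isCoprime_not_dvd_one_sub hf hg hfd hgd hX (hdeg ▸ hK)
  obtain ⟨M, hM, hT⟩ :=
    exists_conj_mul_inv_isTransvection hA hcA hf₁ hf₁d (hfg.trans hfg₁) (hfg ▸ hb) hg₁b
  exact ⟨M, 1, hM, by simp, by simpa only [inv_one, one_mul, mul_one] using hT⟩
end
end
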